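/- Let 𝒫 be a partition of ℕ into infinitely many infinite sets and let F be a free filter on ℕ with F ≤_RK F_𝒫. Then either F is relatively equivalent to the Fréchet filter, or F ≈ F_𝒫 (there is a bijection g : ℕ → ℕ with g[F] = F_𝒫). -/

import Mathlib

open Set

/-- `f[G] = {A : f⁻¹(A) ∈ G}`, the image (Rudin–Keisler) filter of a family of sets. -/
def mapFilter {α β : Type*} (f : α → β) (G : Set (Set α)) : Set (Set β) := {A | f ⁻¹' A ∈ G}

/-- `F` is a (proper) filter of subsets. -/
def IsFilterFam {α : Type*} (F : Set (Set α)) : Prop :=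
  Set.univ ∈ F ∧ (∀ A ∈ F, ∀ B : Set α, A ⊆ B → B ∈ F) ∧ (∀ A ∈ F, ∀ B ∈ F, A ∩ B ∈ F)

/-- A free filter: a proper filter containing all cofinite sets. -/
def IsFreeFilter {α : Type*} (F : Set (Set α)) : Prop :=
  IsFilterFam F ∧ (∀ A : Set α, Aᶜ.Finite → A ∈ F) ∧ ∅ ∉ F

/-- `S → F` : `S` is an infinite set converging to the filter `F`, i.e. `S ⊆* A` for all `A ∈ F`. -/
def ConvTo {α : Type*} (S : Set α) (F : Set (Set α)) : Prop :=
  S.Infinite ∧ ∀ A ∈ F, (S \ A).Finite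

/-- `F` is relatively equivalent to the Fréchet filter: some `A ∈ F` converges to `F`. -/
def RelFrechet {α : Type*} (F : Set (Set α)) : Prop := ∃ A ∈ F, ConvTo A F

/-- Rudin–Keisler order: `F ≤_RK G` iff `f[G] = F` for some surjection `f`. -/
def RKle {α : Type*} (F G : Set (Set α)) : Prop :=
  ∃ f : α → α, Function.Surjective f ∧ mapFilter f G = F

/-- `F ≈ G` : there is a bijection `f` with `f[F] = G`. -/
def EquivFilter {α : Type*} (F G : Set (Set α)) : Prop :=
  ∃ f : α → α, Function.Bijective f ∧ mapFilter f F = G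

/-- `F <_RK G` : `F ≤_RK G` and `¬ (F ≈ G)`. -/
def RKlt {α : Type*} (F G : Set (Set α)) : Prop := RKle F G ∧ ¬ EquivFilter F G

/-- An AD-family: an infinite family of infinite sets with pairwise finite intersections. -/
def IsADFamily {α : Type*} (𝒜 : Set (Set α)) : Prop :=
  𝒜.Infinite ∧ (∀ A ∈ 𝒜, A.Infinite) ∧ ∀ A ∈ 𝒜, ∀ B ∈ 𝒜, A ≠ B → (A ∩ B).Finite

/-- The ideal generated by a family `𝒜`: sets almost covered by finitely many members of `𝒜`. -/
def idealGen {α : Type*} (𝒜 : Set (Set α)) : Set (Set α) :=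
  {X | ∃ 𝒜' : Finset (Set α), ↑𝒜' ⊆ 𝒜 ∧ (X \ ⋃₀ ↑𝒜').Finite}

/-- `S_𝒜`: the filter dual to the ideal generated by `𝒜`. -/
def SFam {α : Type*} (𝒜 : Set (Set α)) : Set (Set α) := {F | Fᶜ ∈ idealGen 𝒜}

/-- `F_𝒟 = {F : D ⊆* F for every D ∈ 𝒟}`. -/
def FFam {α : Type*} (𝒟 : Set (Set α)) : Set (Set α) := {F | ∀ D ∈ 𝒟, (D \ F).Finite}

/-- A nowhere MAD family: every set outside the generated ideal contains an infinite set
almost disjoint from every member of `𝒜`. -/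
def IsNMAD {α : Type*} (𝒜 : Set (Set α)) : Prop :=
  IsADFamily 𝒜 ∧ ∀ X : Set α, X ∉ idealGen 𝒜 →
    ∃ B ⊆ X, B.Infinite ∧ ∀ A ∈ 𝒜, (B ∩ A).Finite

/-- A partition of `ℕ` into infinitely many infinite sets. -/
def IsInfPartition (𝒬 : Set (Set ℕ)) : Prop :=
  𝒬.Infinite ∧ (∀ P ∈ 𝒬, P.Infinite) ∧ ⋃₀ 𝒬 = Set.univ ∧
    ∀ P ∈ 𝒬, ∀ Q ∈ 𝒬, P ≠ Q → P ∩ Q = ∅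

/-- `F` is a Fréchet–Urysohn filter: every `F`-positive set contains a sequence converging to `F`. -/
def IsFUFilter {α : Type*} (F : Set (Set α)) : Prop :=
  ∀ A : Set α, Aᶜ ∉ F → ∃ S ⊆ A, ConvTo S F

/-- The trace filter `F|_A = {G ∩ A : G ∈ F}`. -/
def traceFam {α : Type*} (F : Set (Set α)) (A : Set α) : Set (Set α) := {S | ∃ G ∈ F, S = G ∩ A}

/-- Todorčević–Uzcátegui order: there are `A ∈ G⁺`, `B ∈ F` and a bijection `f : A → B`
with `f[G|_A] = F|_B`. -/
def TUle {α : Type*} (F G : Set (Set α)) : Prop :=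
  ∃ A : Set α, Aᶜ ∉ G ∧ ∃ B ∈ F, ∃ f : α → α, Set.BijOn f A B ∧
    {Y : Set α | Y ⊆ B ∧ A ∩ f ⁻¹' Y ∈ traceFam G A} = traceFam F B

/-!
Freeness of `f[F_𝒬]` forces `f` to be finite-to-one on every piece of `𝒬`, so `f[F_𝒬]` is again
of the form `F_𝒟`, where `𝒟` consists of the images of the pieces. These images may overlap, but a
countable family can be made disjoint without changing its filter, because disjointification
preserves finite unions. Discard the finite pieces as well. If finitely many pieces remain, their
union witnesses relative equivalence to the Fréchet filter. Otherwise, put at most one uncovered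
point into each piece: the result is a partition into infinitely many infinite sets, and all such
partitions are alike. Finally, `F_𝒬` is a FAN-filter too whenever `f[F_𝒬]` is, as relative
equivalence to the Fréchet filter passes to free images.
-/

section FFam

variable {α β ι : Type*}

lemma mem_FFam_range {P : ι → Set α} {A : Set α} :
    A ∈ FFam (range P) ↔ ∀ i, (P i \ A).Finite :=
  forall_mem_range

lemma isFilterFam_FFam (𝒟 : Set (Set α)) : IsFilterFam (FFam 𝒟) := by
  refine ⟨fun D _ => by simp, fun A hA B hAB D hD => ?_, fun A hA B hB D hD => ?_⟩
  · exact (hA D hD).subset (sdiff_subset_sdiff_right hAB)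
  · rw [sdiff_inter]
    exact (hA D hD).union (hB D hD)

lemma empty_mem_FFam_iff {𝒟 : Set (Set α)} : ∅ ∈ FFam 𝒟 ↔ ∀ D ∈ 𝒟, D.Finite := by
  simp only [FFam, mem_ofPred_eq, sdiff_empty]

lemma FFam_sep_infinite (𝒟 : Set (Set α)) : FFam {D ∈ 𝒟 | D.Infinite} = FFam 𝒟 := by
  ext A
  refine ⟨fun hA D hD => ?_, fun hA D hD => hA D hD.1⟩
  by_cases hDinf : D.Infinite
  · exact hA D ⟨hD, hDinf⟩
  · exact (not_infinite.1 hDinf).sdiff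

lemma FFam_range_partialSups (D : ℕ → Set α) : FFam (range (partialSups D)) = FFam (range D) := by
  ext A
  simp only [mem_FFam_range]
  refine ⟨fun h k => (h k).subset (sdiff_subset_sdiff_left (le_partialSups D k)), fun h k => ?_⟩
  simp only [partialSups_eq_accumulate, accumulate_def, iUnion_sdiff]
  exact (finite_Iic k).biUnion fun j _ => h j

lemma FFam_range_disjointed (D : ℕ → Set α) : FFam (range (disjointed D)) = FFam (range D) := by
  rw [← FFam_range_partialSups, partialSups_disjointed, FFam_range_partialSups]

lemma FFam_range_eq_of_subset {P Q : ι → Set α} (hsub : ∀ i, P i ⊆ Q i)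
    (hfin : ∀ i, (Q i \ P i).Finite) : FFam (range P) = FFam (range Q) := by
  ext A
  simp only [mem_FFam_range]
  refine forall_congr' fun i => ⟨fun h => ?_, fun h => h.subset (sdiff_subset_sdiff_left (hsub i))⟩
  exact ((hfin i).union h).subset (sdiff_triangle (Q i) (P i) A)

lemma mapFilter_FFam {f : α → β} {𝒟 : Set (Set α)}
    (hf : ∀ D ∈ 𝒟, ∀ y, (D ∩ f ⁻¹' {y}).Finite) :
    mapFilter f (FFam 𝒟) = FFam (image f '' 𝒟) := by
  ext A
  have finite_iff (D) (hD : D ∈ 𝒟) : (D \ f ⁻¹' A).Finite ↔ (f '' D \ A).Finite := by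
    rw [← image_sdiff_preimage]
    refine ⟨fun h => h.image f, fun h => h.of_finite_fibers f fun y _ => ?_⟩
    exact (hf D hD y).subset (inter_subset_inter_left _ sdiff_subset)
  exact (forall₂_congr finite_iff).trans (forall_mem_image (p := fun E => (E \ A).Finite)).symm

lemma mapFilter_FFam_of_isFreeFilter {f : α → β} {𝒟 : Set (Set α)}
    (hfree : IsFreeFilter (mapFilter f (FFam 𝒟))) :
    mapFilter f (FFam 𝒟) = FFam (image f '' 𝒟) := by
  refine mapFilter_FFam fun D hD y => ?_
  have hy : {y}ᶜ ∈ mapFilter f (FFam 𝒟) := hfree.2.1 _ (by simp)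
  simpa only [preimage_compl, sdiff_compl] using hy D hD

end FFam

section RelFrechet

variable {α β : Type*}

lemma relFrechet_FFam_of_finite {𝒟 : Set (Set α)} (hfin : 𝒟.Finite) (hproper : ∅ ∉ FFam 𝒟) :
    RelFrechet (FFam 𝒟) := by
  refine ⟨⋃₀ 𝒟, fun D hD => ?_, fun hU => hproper ?_, fun A hA => ?_⟩
  · rw [sdiff_eq_empty.2 (subset_sUnion_of_mem hD)]
    exact finite_empty
  · exact empty_mem_FFam_iff.2 fun D hD => hU.subset (subset_sUnion_of_mem hD)
  · simp only [sUnion_eq_biUnion, iUnion_sdiff]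
    exact hfin.biUnion hA

lemma RelFrechet.map {f : α → β} {G : Set (Set α)} (hG : IsFilterFam G)
    (hfree : IsFreeFilter (mapFilter f G)) (h : RelFrechet G) : RelFrechet (mapFilter f G) := by
  obtain ⟨A, hAG, hAinf, hAconv⟩ := h
  refine ⟨f '' A, hG.2.1 A hAG _ (subset_preimage_image f A), fun hfin => ?_, fun B hB => ?_⟩
  · have hcompl : (f '' A)ᶜ ∈ mapFilter f G := hfree.2.1 _ (by rwa [compl_compl])
    have hA := hAconv _ hcompl
    rw [preimage_compl, sdiff_compl, inter_eq_left.2 (subset_preimage_image f A)] at hA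
    exact hAinf hA
  · rw [← image_sdiff_preimage]
    exact (hAconv _ hB).image f

end RelFrechet

section Fan

variable {α : Type*}

/-- The standard FAN-filter, living on `ℕ × ℕ`, with pieces the columns `{k} × ℕ`. It serves as
the common model to which FAN-filters on other sets are compared. -/
def fanFilter : Set (Set (ℕ × ℕ)) := FFam (range fun k : ℕ => Prod.fst ⁻¹' {k})

lemma exists_equiv_prod_nat_fst_eq [Countable α] {c : α → ℕ} (hc : ∀ k, (c ⁻¹' {k}).Infinite) :
    ∃ e : α ≃ ℕ × ℕ, ∀ x, (e x).1 = c x := by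
  have fiberEquiv (k : ℕ) : Nonempty ({x // c x = k} ≃ ℕ) := by
    have : Infinite {x // c x = k} := (hc k).to_subtype
    exact nonempty_equiv_of_countable
  let ε := Equiv.sigmaCongrRight fun k => (fiberEquiv k).some
  exact ⟨(Equiv.sigmaFiberEquiv c).symm.trans (ε.trans (Equiv.sigmaEquivProd ℕ ℕ)), fun _ => rfl⟩

lemma exists_fibers_almost_eq [Countable α] {P : ℕ → Set α}
    (hP : Pairwise (Function.onFun Disjoint P)) :
    ∃ c : α → ℕ, ∀ k, P k ⊆ c ⁻¹' {k} ∧ (c ⁻¹' {k} \ P k).Finite := by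
  classical
  -- An uncovered `x` joins piece number `j x`; as `j` is injective, no piece gains two points.
  obtain ⟨j, hj⟩ := exists_injective_nat α
  refine ⟨fun x => if h : ∃ k, x ∈ P k then h.choose else j x, fun k => ⟨fun x hx => ?_, ?_⟩⟩
  · have hcov : ∃ k, x ∈ P k := ⟨k, hx⟩
    simp only [mem_preimage, dif_pos hcov, mem_singleton_iff]
    exact hP.eq (not_disjoint_iff.2 ⟨x, hcov.choose_spec, hx⟩)
  · refine ((finite_singleton k).preimage hj.injOn).subset ?_
    rintro x ⟨hxk, hxP⟩
    by_cases hcov : ∃ k, x ∈ P k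
    · simp only [mem_preimage, dif_pos hcov, mem_singleton_iff] at hxk
      exact absurd (hxk ▸ hcov.choose_spec) hxP
    · simpa only [mem_preimage, dif_neg hcov] using hxk

lemma mapFilter_FFam_range_fibers {c : α → ℕ} (e : α ≃ ℕ × ℕ) (he : ∀ x, (e x).1 = c x) :
    mapFilter e (FFam (range fun k => c ⁻¹' {k})) = fanFilter := by
  have image_fiber (k : ℕ) : e '' (c ⁻¹' {k}) = Prod.fst ⁻¹' {k} := by
    rw [e.image_eq_preimage_symm]
    ext y
    simp [← he]
  have finite_fiber (y : ℕ × ℕ) : (e ⁻¹' {y}).Finite :=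
    (finite_singleton y).preimage e.injective.injOn
  rw [mapFilter_FFam fun D _ y => (finite_fiber y).inter_of_right D, ← range_comp]
  simp only [Function.comp_def, image_fiber, fanFilter]

lemma exists_equiv_mapFilter_eq_fanFilter [Countable α] {𝒟 : Set (Set α)} (hcount : 𝒟.Countable)
    (hinf : 𝒟.Infinite) (hpiece : ∀ D ∈ 𝒟, D.Infinite) (hdisj : 𝒟.PairwiseDisjoint id) :
    ∃ e : α ≃ ℕ × ℕ, mapFilter e (FFam 𝒟) = fanFilter := by
  have : Countable 𝒟 := hcount.to_subtype
  have : Infinite 𝒟 := hinf.to_subtype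
  obtain ⟨ε⟩ : Nonempty (ℕ ≃ 𝒟) := nonempty_equiv_of_countable
  have hrange : range (fun k => (ε k : Set α)) = 𝒟 := by
    rw [← Function.comp_def, ε.surjective.range_comp, Subtype.range_coe]
  obtain ⟨c, hc⟩ := exists_fibers_almost_eq (P := fun k => (ε k : Set α)) fun i j hij =>
    hdisj (ε i).2 (ε j).2 (Subtype.coe_injective.ne (ε.injective.ne hij))
  obtain ⟨e, he⟩ := exists_equiv_prod_nat_fst_eq fun k => (hpiece _ (ε k).2).mono (hc k).1
  refine ⟨e, ?_⟩
  rw [← hrange, FFam_range_eq_of_subset (fun k => (hc k).1) fun k => (hc k).2]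
  exact mapFilter_FFam_range_fibers e he

theorem relFrechet_or_mapFilter_eq_fanFilter [Countable α] {𝒟 : Set (Set α)} (hcount : 𝒟.Countable)
    (hproper : ∅ ∉ FFam 𝒟) :
    RelFrechet (FFam 𝒟) ∨ ∃ e : α ≃ ℕ × ℕ, mapFilter e (FFam 𝒟) = fanFilter := by
  have hne : 𝒟.Nonempty := by
    rw [empty_mem_FFam_iff] at hproper
    push Not at hproper
    exact hproper.imp fun _ h => h.1
  obtain ⟨D, rfl⟩ := hcount.exists_eq_range hne
  let 𝓔 : Set (Set α) := {E ∈ range (disjointed D) | E.Infinite}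
  have h𝓔 : FFam 𝓔 = FFam (range D) := (FFam_sep_infinite _).trans (FFam_range_disjointed D)
  rw [← h𝓔] at hproper ⊢
  rcases 𝓔.finite_or_infinite with hfin | hinf
  · exact .inl (relFrechet_FFam_of_finite hfin hproper)
  · have hdisj : (range (disjointed D)).PairwiseDisjoint id :=
      (disjoint_disjointed D).range_pairwise
    exact .inr (exists_equiv_mapFilter_eq_fanFilter ((countable_range _).mono (sep_subset _ _))
      hinf (fun _ hE => hE.2) (hdisj.subset (sep_subset _ _)))

end Fan

lemma IsInfPartition.countable {𝒬 : Set (Set ℕ)} (h𝒬 : IsInfPartition 𝒬) : 𝒬.Countable := by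
  have hdisj : 𝒬.PairwiseDisjoint id := fun P hP Q hQ hPQ =>
    disjoint_iff_inter_eq_empty.2 (h𝒬.2.2.2 P hP Q hQ hPQ)
  exact hdisj.countable_of_isOpen (fun _ _ => isOpen_discrete _) fun P hP => (h𝒬.2.1 P hP).nonempty

theorem statement5_general {α β : Type*} [Countable α] [Countable β] {𝒬 : Set (Set α)}
    (hcount : 𝒬.Countable) {f : α → β} (hfree : IsFreeFilter (mapFilter f (FFam 𝒬))) :
    RelFrechet (mapFilter f (FFam 𝒬)) ∨
      ∃ g : β → α, Function.Bijective g ∧ mapFilter g (mapFilter f (FFam 𝒬)) = FFam 𝒬 := by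
  refine or_iff_not_imp_left.2 fun hnot => ?_
  have hnot' : ¬ RelFrechet (FFam 𝒬) := fun h =>
    hnot (h.map (isFilterFam_FFam 𝒬) hfree)
  have hproper : ∅ ∉ FFam 𝒬 := hfree.2.2
  obtain ⟨e, he⟩ := (relFrechet_or_mapFilter_eq_fanFilter hcount hproper).resolve_left hnot'
  have himage := mapFilter_FFam_of_isFreeFilter hfree
  rw [himage] at hfree hnot ⊢
  obtain ⟨e', he'⟩ :=
    (relFrechet_or_mapFilter_eq_fanFilter (hcount.image _) hfree.2.2).resolve_left hnot
  refine ⟨e'.trans e.symm, (e'.trans e.symm).bijective, ?_⟩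
  calc mapFilter (e'.trans e.symm) (FFam (image f '' 𝒬))
      = mapFilter e.symm (mapFilter e' (FFam (image f '' 𝒬))) := rfl
    _ = mapFilter e.symm (mapFilter e (FFam 𝒬)) := by rw [he', he]
    _ = FFam 𝒬 := by simp [mapFilter, ← preimage_comp]

/-- Any RK-predecessor of the FAN-filter is either relatively equivalent to the Fréchet filter
or equivalent to the FAN-filter itself. -/
theorem statement5 (𝒬 : Set (Set ℕ)) (h𝒬 : IsInfPartition 𝒬) (F : Set (Set ℕ))
    (hF : IsFreeFilter F) (h : RKle F (FFam 𝒬)) :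
    RelFrechet F ∨ ∃ g : ℕ → ℕ, Function.Bijective g ∧ mapFilter g F = FFam 𝒬 := by
  obtain ⟨f, -, rfl⟩ := h
  exact statement5_general h𝒬.countable hF
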